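/- Let d ≥ 2 be an integer, let T = (V,E) be a critical d-dominating tournament, and let U be a proper subset of V such that the restriction of T* to U is (d+1)-dominating. Then this restriction is trivially (d+1)-dominating: there exists w ∈ U such that (u,w) is an edge of T* for every u ∈ U (including the loop (w,w)). -/

import Mathlib

/-- `E` is a tournament on `V`: loopless, and for all distinct `x,y` exactly one of
`(x,y)`, `(y,x)` is an edge. -/
def IsTournament {V : Type*} (E : V → V → Prop) : Prop :=
  (∀ x : V, ¬ E x x) ∧ ∀ x y : V, x ≠ y → (E x y ↔ ¬ E y x)

/-- The restriction of the digraph `E` to `U` is `d`-dominating: every finite `S ⊆ U`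
with `1 ≤ |S| ≤ d` has a common out-neighbor in `U`. -/
def DomOn {V : Type*} (E : V → V → Prop) (d : ℕ) (U : Set V) : Prop :=
  ∀ S : Finset V, ↑S ⊆ U → S.Nonempty → S.card ≤ d → ∃ w ∈ U, ∀ s ∈ S, E s w

/-- `T*`: the digraph obtained from `E` by adding a loop at every vertex. -/
def WithLoops {V : Type*} (E : V → V → Prop) : V → V → Prop :=
  fun x y => E x y ∨ x = y

/-!
Criticality gives a nonempty `S ⊆ U` with at most `d` elements and no common out-neighbor in `U`.
A common out-neighbor of `S` in `T*` must use a loop, so it lies in `S`, and antisymmetry allows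
only one such vertex `w`. For `u ∈ U`, a common out-neighbor of `S ∪ {u}` in `T*` is one of `S`,
hence equals `w`, so `u` has an edge of `T*` to `w`.
-/

section

variable {V : Type*} {E : V → V → Prop}

theorem IsTournament.antisymm (hT : IsTournament E) : Std.Antisymm E where
  antisymm x y hxy hyx := by
    by_contra hne
    exact (hT.2 x y hne).1 hxy hyx

theorem WithLoops.of_ne {x y : V} (h : WithLoops E x y) (hne : x ≠ y) : E x y :=
  h.resolve_right hne

instance WithLoops.antisymm [Std.Antisymm E] : Std.Antisymm (WithLoops E) where
  antisymm x y hxy hyx := by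
    by_contra hne
    exact hne (antisymm_of E (hxy.of_ne hne) (hyx.of_ne (Ne.symm hne)))

theorem exists_finset_withLoops_outNeighbor_mem_of_not_domOn {d : ℕ} {U : Set V}
    (h : ¬ DomOn E d U) :
    ∃ S : Finset V, ↑S ⊆ U ∧ S.Nonempty ∧ S.card ≤ d ∧
      ∀ w ∈ U, (∀ s ∈ S, WithLoops E s w) → w ∈ S := by
  contrapose! h
  intro S hSU hSne hScard
  obtain ⟨w, hwU, hSw, hwS⟩ := h S hSU hSne hScard
  exact ⟨w, hwU, fun s hs => (hSw s hs).of_ne (ne_of_mem_of_not_mem hs hwS)⟩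

theorem proper_dominating_is_trivial_general [Std.Antisymm E] {d : ℕ} {U : Set V}
    (hU : DomOn (WithLoops E) (d + 1) U) (hndom : ¬ DomOn E d U) :
    ∃ w ∈ U, ∀ u ∈ U, WithLoops E u w := by
  classical
  obtain ⟨S, hSU, hSne, hScard, hmem⟩ :=
    exists_finset_withLoops_outNeighbor_mem_of_not_domOn hndom
  obtain ⟨w, hwU, hSw⟩ := hU S hSU hSne (Nat.le_succ_of_le hScard)
  refine ⟨w, hwU, fun u huU => ?_⟩
  have huSU : ↑(insert u S) ⊆ U := by
    rw [Finset.coe_insert]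
    exact Set.insert_subset huU hSU
  have huScard : (insert u S).card ≤ d + 1 :=
    (Finset.card_insert_le u S).trans (Nat.succ_le_succ hScard)
  obtain ⟨x, hxU, hx⟩ := hU (insert u S) huSU (Finset.insert_nonempty u S) huScard
  obtain ⟨hux, hSx⟩ := (Finset.forall_mem_insert _ _ _).1 hx
  have hxw : x = w :=
    antisymm_of (WithLoops E) (hSw x (hmem x hxU hSx)) (hSx w (hmem w hwU hSw))
  exact hxw ▸ hux

end

/-- Claim: if `T` is a critical `d`-dominating tournament and `U` is a (nonempty)
proper subset of `V` whose restriction of `T*` is `(d+1)`-dominating, then that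
restriction is trivially `(d+1)`-dominating: some `w ∈ U` receives an edge of `T*`
from every vertex of `U` (including the loop at `w`). -/
theorem proper_dominating_is_trivial {V : Type*} (d : ℕ) (hd : 2 ≤ d)
    (E : V → V → Prop) (hT : IsTournament E)
    (hdom : DomOn E d (Set.univ : Set V))
    (hcrit : ∀ U : Set V, U.Nonempty → U ≠ Set.univ → ¬ DomOn E d U)
    (U : Set V) (hUne : U.Nonempty) (hUproper : U ≠ Set.univ)
    (hU : DomOn (WithLoops E) (d + 1) U) :
    ∃ w ∈ U, ∀ u ∈ U, WithLoops E u w := by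
  have := hT.antisymm
  exact proper_dominating_is_trivial_general hU (hcrit U hUne hUproper)
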